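/- Let X be a proper geodesic metric space and p ∈ X. Suppose there exist q ∈ X and two distinct local geodesics γ, σ : [0,1] → X joining p to q. If inj(p) < conj(X) or (L(γ)+L(σ))/2 < conj(X), then inj(p) ≤ (L(γ)+L(σ))/2. -/

import Mathlib

open Set Metric Topology Filter
open scoped ENNReal

noncomputable section

namespace InjSoul

/-- The unit interval `[0,1] ⊆ ℝ`. -/
abbrev I01 : Set ℝ := Set.Icc (0 : ℝ) 1

variable {X : Type*} [MetricSpace X]

/-- `0` as a point of `[0,1]`. -/
def pt0 : I01 := ⟨0, by norm_num⟩

/-- `1` as a point of `[0,1]`. -/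
def pt1 : I01 := ⟨1, by norm_num⟩

/-- `c : [0,1] → X` is a geodesic of speed (= length) `L`. -/
def IsGeod (c : C(I01, X)) (L : ℝ) : Prop :=
  0 ≤ L ∧ ∀ s t : I01, dist (c s) (c t) = L * |(s : ℝ) - (t : ℝ)|

/-- `γ : [0,1] → X` is a local geodesic of speed (= length) `L`. -/
def IsLocGeod (γ : C(I01, X)) (L : ℝ) : Prop :=
  0 ≤ L ∧ ∀ t : I01, ∃ ε > 0, ∀ s s' : I01,
    |(s : ℝ) - (t : ℝ)| < ε → |(s' : ℝ) - (t : ℝ)| < ε →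
      dist (γ s) (γ s') = L * |(s : ℝ) - (s' : ℝ)|

/-- `X` is a geodesic space: any two points are joined by a geodesic. -/
def GeodesicSpace (X : Type*) [MetricSpace X] : Prop :=
  ∀ x y : X, ∃ (c : C(I01, X)) (L : ℝ), IsGeod c L ∧ c pt0 = x ∧ c pt1 = y

/-- The cut locus of `p`: all points joined to `p` by at least two distinct geodesics. -/
def Cut (p : X) : Set X :=
  {q | ∃ (γ σ : C(I01, X)) (Lγ Lσ : ℝ), IsGeod γ Lγ ∧ IsGeod σ Lσ ∧
    γ pt0 = p ∧ γ pt1 = q ∧ σ pt0 = p ∧ σ pt1 = q ∧ γ ≠ σ}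

/-- The injectivity radius of `p`, an element of `[0,∞]` (`∞` if `Cut p = ∅`). -/
def inj (p : X) : ℝ≥0∞ := ⨅ q ∈ Cut p, edist p q

/-- The minimal cut locus of `p`: points `γ t₀`, `t₀ ∈ (0,1)`, on a nontrivial local geodesic
`γ` issuing in `p` such that `γ` is minimizing on `[0,t₀]` but on no larger interval `[0,t]`. -/
def MinCut (p : X) : Set X :=
  {q | ∃ (γ : C(I01, X)) (L : ℝ) (t₀ : ℝ) (ht₀ : t₀ ∈ Set.Ioo (0 : ℝ) 1),
      IsLocGeod γ L ∧ 0 < L ∧ γ pt0 = p ∧ γ ⟨t₀, Set.mem_Icc_of_Ioo ht₀⟩ = q ∧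
      dist p q = L * t₀ ∧
      ∀ t : ℝ, ∀ ht : t ∈ Set.Ioc t₀ 1,
        dist p (γ ⟨t, ⟨(ht₀.1.trans ht.1).le, ht.2⟩⟩) ≠ L * t}

/-- The minimal radius of `p`, an element of `[0,∞]` (`∞` if `MinCut p = ∅`). -/
def minRad (p : X) : ℝ≥0∞ := ⨅ q ∈ MinCut p, edist p q

/-- The space `X̃_p` of local geodesics issuing in `p` (including the constant map), viewed
as a subset of the continuous maps `C([0,1], X)` whose metric is the uniform metric `ρ`. -/
def LocGeodFrom (p : X) : Set C(I01, X) := {γ | (∃ L, IsLocGeod γ L) ∧ γ pt0 = p}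

/-- The endpoint map `exp_p : X̃_p → X`, `γ ↦ γ 1`. -/
def endpt : C(I01, X) → X := fun γ => γ pt1

/-- `γ 1` is conjugate to `p = γ 0` along the local geodesic `γ`: no neighborhood `U` of `γ`
in `X̃_p` is mapped homeomorphically onto its image by the endpoint map. -/
def ConjugateAlong (p : X) (γ : C(I01, X)) : Prop :=
  γ ∈ LocGeodFrom p ∧
    ¬ ∃ U : Set C(I01, X), U ⊆ LocGeodFrom p ∧ U ∈ 𝓝[LocGeodFrom p] γ ∧
      Topology.IsEmbedding (U.restrict endpt)

/-- The conjugate radius of `p`: the infimum of lengths of local geodesics issuing in `p`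
along which the endpoint is conjugate to `p` (`∞` if there are none). -/
def conjRad (p : X) : ℝ≥0∞ :=
  sInf {l | ∃ (γ : C(I01, X)) (L : ℝ), IsLocGeod γ L ∧ γ pt0 = p ∧
    ConjugateAlong p γ ∧ l = ENNReal.ofReal L}

/-- The conjugate radius of the space `X`. -/
def conjSpace (X : Type*) [MetricSpace X] : ℝ≥0∞ := ⨅ p : X, conjRad p



lemma lip_aux {γ : C(I01, X)} {L : ℝ} (h : IsLocGeod γ L) (s : I01) :
    Icc (s : ℝ) 1 ⊆ {x : ℝ | dist (γ s) (γ (projIcc 0 1 zero_le_one x)) ≤ L * (x - s)} := by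
  have hcont : Continuous (fun x : ℝ => γ (projIcc 0 1 zero_le_one x)) :=
    γ.continuous.comp continuous_projIcc
  apply IsClosed.Icc_subset_of_forall_exists_gt
  · apply IsClosed.inter _ isClosed_Icc
    exact isClosed_le (continuous_const.dist hcont) (by fun_prop)
  · have : projIcc (0:ℝ) 1 zero_le_one (s:ℝ) = s := projIcc_val _ s
    simp [this]
  · rintro x ⟨hx, hx1⟩ y hy
    have hs0 := s.2.1
    have hx0 : x ∈ Icc (0:ℝ) 1 := ⟨hs0.trans hx1.1, hx1.2.le⟩
    obtain ⟨ε, hε, he⟩ := h.2 ⟨x, hx0⟩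
    obtain ⟨z, hz1, hz2⟩ := exists_between (lt_min (lt_min (hy : x < y) hx1.2)
      (show x < x + ε by linarith))
    rw [lt_min_iff, lt_min_iff] at hz2
    have hz0 : z ∈ Icc (0:ℝ) 1 := ⟨hx0.1.trans hz1.le, hz2.1.2.le⟩
    refine ⟨z, ?_, hz1, hz2.1.1.le⟩
    simp only [mem_setOf_eq] at hx ⊢
    rw [projIcc_of_mem _ hx0] at hx
    rw [projIcc_of_mem _ hz0]
    have := he ⟨x, hx0⟩ ⟨z, hz0⟩ (by simpa using hε) (by
      simp only; rw [abs_of_pos (by linarith)]; linarith)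
    simp only at this
    rw [abs_sub_comm, abs_of_pos (by linarith)] at this
    have h3 := dist_triangle (γ s) (γ ⟨x, hx0⟩) (γ ⟨z, hz0⟩)
    linarith

lemma lip {γ : C(I01, X)} {L : ℝ} (h : IsLocGeod γ L) (s t : I01) (hst : (s:ℝ) ≤ t) :
    dist (γ s) (γ t) ≤ L * (t - s) := by
  have := lip_aux h s ⟨hst, t.2.2⟩
  have e : projIcc (0:ℝ) 1 zero_le_one (t:ℝ) = t := projIcc_val _ t
  simpa [e] using this

lemma IsGeod.loc {γ : C(I01, X)} {L : ℝ} (h : IsGeod γ L) : IsLocGeod γ L :=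
  ⟨h.1, fun _ => ⟨1, one_pos, fun s s' _ _ => h.2 s s'⟩⟩

lemma speed_unique {γ : C(I01, X)} {L L' : ℝ} (h : IsLocGeod γ L) (h' : IsLocGeod γ L') :
    L = L' := by
  obtain ⟨ε, hε, he⟩ := h.2 pt0
  obtain ⟨ε', hε', he'⟩ := h'.2 pt0
  obtain ⟨z, hz1, hz2⟩ := exists_between (lt_min (lt_min hε hε') one_pos)
  rw [lt_min_iff, lt_min_iff] at hz2
  have hz0 : z ∈ Icc (0:ℝ) 1 := ⟨hz1.le, hz2.2.le⟩
  have a := he ⟨z, hz0⟩ pt0 (by simpa [pt0, abs_of_pos hz1] using hz2.1.1) (by simpa using hε)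
  have b := he' ⟨z, hz0⟩ pt0 (by simpa [pt0, abs_of_pos hz1] using hz2.1.2) (by simpa using hε')
  rw [a] at b
  have : |z - ((pt0 : I01) : ℝ)| ≠ 0 := by simp [pt0, hz1.ne']
  exact mul_right_cancel₀ this b

/-- multiplication on the unit interval -/
def mulI (t s : I01) : I01 :=
  ⟨t * s, mul_nonneg t.2.1 s.2.1, mul_le_one₀ t.2.2 s.2.1 s.2.2⟩

lemma continuous_mulI : Continuous (fun x : I01 × I01 => mulI x.1 x.2) :=
  Continuous.subtype_mk (by fun_prop) _

/-- restriction of a path to `[0,t]`, reparametrized -/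
def restr (γ : C(I01, X)) : C(I01, C(I01, X)) :=
  ContinuousMap.curry ⟨fun x : I01 × I01 => γ (mulI x.1 x.2), γ.continuous.comp continuous_mulI⟩

lemma restr_apply (γ : C(I01, X)) (t s : I01) : restr γ t s = γ (mulI t s) := rfl

lemma mulI_pt0 (t : I01) : mulI t pt0 = pt0 := by simp [mulI, pt0]

lemma mulI_pt1 (t : I01) : mulI t pt1 = t := by simp [mulI, pt1]

lemma pt1_mulI (t : I01) : mulI pt1 t = t := by simp [mulI, pt1]

lemma restr_pt1 (γ : C(I01, X)) : restr γ pt1 = γ := by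
  ext s
  rw [restr_apply, pt1_mulI]

lemma restr_loc {γ : C(I01, X)} {L : ℝ} (h : IsLocGeod γ L) (t : I01) :
    IsLocGeod (restr γ t) (L * t) := by
  refine ⟨mul_nonneg h.1 t.2.1, fun u => ?_⟩
  obtain ⟨ε, hε, he⟩ := h.2 (mulI t u)
  have key : ∀ a b : I01, |((mulI t a : I01) : ℝ) - (mulI t b : I01)| = t * |(a:ℝ) - b| := by
    intro a b
    simp only [mulI]
    rw [← mul_sub, abs_mul, abs_of_nonneg t.2.1]
  have key2 : ∀ a b : I01, t * |(a:ℝ) - b| ≤ |(a:ℝ) - b| := fun a b =>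
    mul_le_of_le_one_left (abs_nonneg _) t.2.2
  refine ⟨ε, hε, fun s s' hs hs' => ?_⟩
  rw [restr_apply, restr_apply, he, key, mul_assoc]
  · rw [key]; exact (key2 _ _).trans_lt hs
  · rw [key]; exact (key2 _ _).trans_lt hs'

lemma restr_geod {γ : C(I01, X)} {L : ℝ} (h : IsLocGeod γ L) (t : I01)
    (ht : dist (γ pt0) (γ t) = L * t) : IsGeod (restr γ t) (L * t) := by
  refine ⟨mul_nonneg h.1 t.2.1, ?_⟩
  have main : ∀ a b : I01, (a:ℝ) ≤ b →
      dist (restr γ t a) (restr γ t b) = L * t * |(a:ℝ) - b| := by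
    intro a b hab
    have hl := restr_loc h t
    have h1 := lip hl pt0 a a.2.1
    have h2 := lip hl a b hab
    have h3 := lip hl b pt1 b.2.2
    have h4 := dist_triangle4 (restr γ t pt0) (restr γ t a) (restr γ t b) (restr γ t pt1)
    have h5 : dist (restr γ t pt0) (restr γ t pt1) = L * t := by
      rw [restr_apply, restr_apply, mulI_pt0, mulI_pt1, ht]
    have e0 : ((pt0 : I01) : ℝ) = 0 := rfl
    have e1 : ((pt1 : I01) : ℝ) = 1 := rfl
    rw [e0] at h1
    rw [e1] at h3
    rw [abs_sub_comm, abs_of_nonneg (by linarith)]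
    apply le_antisymm h2
    linarith
  intro a b
  rcases le_total (a:ℝ) b with hab | hab
  · exact main a b hab
  · rw [dist_comm, abs_sub_comm]; exact main b a hab

/-- geodesics from `p` of length at most `M` -/
def geodSet (p : X) (M : ℝ) : Set (I01 → X) :=
  {f | f pt0 = p ∧ dist p (f pt1) ≤ M ∧ ∀ s t : I01,
    dist (f s) (f t) = dist p (f pt1) * |(s : ℝ) - (t : ℝ)|}

lemma isClosed_geodSet (p : X) (M : ℝ) : IsClosed (geodSet p M) := by
  have e : geodSet p M = {f : I01 → X | f pt0 = p} ∩ ({f : I01 → X | dist p (f pt1) ≤ M} ∩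
      ⋂ s : I01, ⋂ t : I01, {f : I01 → X | dist (f s) (f t) =
        dist p (f pt1) * |(s : ℝ) - (t : ℝ)|}) := by
    ext f
    simp only [geodSet, mem_ofPred_eq, mem_inter_iff, mem_iInter]
  rw [e]
  refine (isClosed_eq (by fun_prop) (by fun_prop)).inter
    ((isClosed_le (by fun_prop) (by fun_prop)).inter ?_)
  exact isClosed_iInter fun s => isClosed_iInter fun t =>
    isClosed_eq (by fun_prop) (by fun_prop)

lemma geodSet_lip {p : X} {M : ℝ} {f : I01 → X} (hf : f ∈ geodSet p M) (s t : I01) :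
    dist (f s) (f t) ≤ M * dist s t := by
  rw [hf.2.2 s t]
  exact mul_le_mul_of_nonneg_right hf.2.1 (abs_nonneg _)

lemma isCompact_geodSet [ProperSpace X] (p : X) (M : ℝ) : IsCompact (geodSet p M) := by
  refine (isCompact_univ_pi (fun _ : I01 => isCompact_closedBall p M)).of_isClosed_subset
    (isClosed_geodSet p M) ?_
  intro f hf s _
  have h := hf.2.2 s pt0
  rw [hf.1] at h
  rw [mem_closedBall, h]
  have e0 : ((pt0 : I01) : ℝ) = 0 := rfl
  rw [e0, sub_zero, abs_of_nonneg s.2.1]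
  exact (mul_le_of_le_one_right dist_nonneg s.2.2).trans hf.2.1

lemma isCompact_geodSetC [ProperSpace X] (p : X) (M : ℝ) :
    IsCompact {c : C(I01, X) | (c : I01 → X) ∈ geodSet p M} := by
  apply ArzelaAscoli.isCompact_of_equicontinuous
  · convert isCompact_geodSet p M
    ext f
    constructor
    · rintro ⟨c, hc, rfl⟩
      exact hc
    · intro hf
      have hl : LipschitzWith M.toNNReal f := LipschitzWith.of_dist_le' (geodSet_lip hf)
      exact ⟨⟨f, hl.continuous⟩, hf, rfl⟩
  · refine Metric.equicontinuous_of_continuity_modulus (fun x => M * x) ?_ _ ?_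
    · have : Tendsto (fun x : ℝ => M * x) (𝓝 0) (𝓝 (M * 0)) := tendsto_id.const_mul M
      simpa using this
    · intro x y i
      exact geodSet_lip i.2 x y

lemma IsGeod.length {c : C(I01, X)} {L : ℝ} (h : IsGeod c L) : dist (c pt0) (c pt1) = L := by
  rw [h.2]; simp [pt0, pt1]

lemma unique_of_lt_inj {p : X} {c c' : C(I01, X)} {L L' : ℝ} (h : IsGeod c L) (h' : IsGeod c' L')
    (h0 : c pt0 = p) (h0' : c' pt0 = p) (h1 : c pt1 = c' pt1)
    (hi : ENNReal.ofReal L < inj p) : c = c' := by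
  by_contra hne
  have hm : c pt1 ∈ Cut p := ⟨c, c', L, L', h, h', h0, rfl, h0', h1.symm, hne⟩
  have : inj p ≤ edist p (c pt1) := iInf₂_le _ hm
  rw [edist_dist, ← h0, h.length, h0] at this
  exact absurd this (not_le.2 hi)

lemma open_lemma [ProperSpace X] (hgeo : GeodesicSpace X) {p : X} {γ : C(I01, X)} {L : ℝ}
    (h : IsLocGeod γ L) (h0 : γ pt0 = p) (t : I01) (ht : dist p (γ t) = L * t)
    (hi : ENNReal.ofReal (L * t) < inj p) (hc : ENNReal.ofReal (L * t) < conjRad p) :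
    ∀ᶠ t' in 𝓝 t, dist p (γ t') = L * t' := by
  have hgt := restr_geod h t (by rw [h0, ht])
  have hr0 : ∀ t, restr γ t pt0 = p := fun t => by rw [restr_apply, mulI_pt0, h0]
  have hr1 : ∀ t, restr γ t pt1 = γ t := fun t => by rw [restr_apply, mulI_pt1]
  have hmem : ∀ t, restr γ t ∈ LocGeodFrom p := fun t => ⟨⟨_, restr_loc h t⟩, hr0 t⟩
  choose f ℓ hf hf0 hf1 using fun t' : I01 => hgeo p (γ t')
  have hℓ : ∀ t', ℓ t' = dist p (γ t') := fun t' => by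
    rw [← (hf t').length, hf0, hf1]
  have hfmem : ∀ t, f t ∈ LocGeodFrom p := fun t => ⟨⟨_, (hf t).loc⟩, hf0 t⟩
  have hfK : ∀ t', (f t' : I01 → X) ∈ geodSet p L := fun t' => by
    refine ⟨hf0 t', ?_, fun a b => ?_⟩
    · rw [hf1]
      have := lip h pt0 t' t'.2.1
      rw [h0] at this
      refine this.trans ?_
      have e0 : ((pt0 : I01) : ℝ) = 0 := rfl
      rw [e0, sub_zero]
      exact mul_le_of_le_one_right h.1 t'.2.2
    · rw [(hf t').2, hf1, hℓ]
  have hlim : Tendsto f (𝓝 t) (𝓝 (restr γ t)) := by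
    refine (isCompact_geodSetC p L).tendsto_nhds_of_unique_mapClusterPt
      (Eventually.of_forall hfK) ?_
    intro c hcK hcl
    have hend : c pt1 = γ t := by
      have hev : Continuous (fun c : C(I01, X) => c pt1) := by fun_prop
      have h1 := hcl.continuousAt_comp hev.continuousAt
      have h2 : (fun c : C(I01, X) => c pt1) ∘ f = γ := by
        funext t'; exact hf1 t'
      rw [h2] at h1
      exact eq_of_nhds_neBot (ClusterPt.mono h1 γ.continuous.continuousAt)
    have hcg : IsGeod c (dist p (c pt1)) := ⟨dist_nonneg, hcK.2.2⟩
    exact (unique_of_lt_inj hgt hcg (hr0 t) hcK.1 (by rw [hr1, hend]) hi).symm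
  have hnc : ¬ ConjugateAlong p (restr γ t) := fun hcon =>
    absurd (sInf_le ⟨_, _, restr_loc h t, hr0 t, hcon, rfl⟩ : conjRad p ≤ _) (not_le.2 hc)
  have hU : ∃ U : Set C(I01, X), U ⊆ LocGeodFrom p ∧ U ∈ 𝓝[LocGeodFrom p] (restr γ t) ∧
      Topology.IsEmbedding (U.restrict endpt) := by
    by_contra hcon
    exact hnc ⟨hmem t, hcon⟩
  obtain ⟨U, -, hU, hemb⟩ := hU
  have e1 : ∀ᶠ t' in 𝓝 t, f t' ∈ U :=
    (tendsto_nhdsWithin_iff.2 ⟨hlim, Eventually.of_forall hfmem⟩) hU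
  have e2 : ∀ᶠ t' in 𝓝 t, restr γ t' ∈ U :=
    (tendsto_nhdsWithin_iff.2 ⟨(restr γ).continuous.continuousAt, Eventually.of_forall hmem⟩) hU
  filter_upwards [e1, e2] with t' h1 h2
  have heq : (⟨f t', h1⟩ : U) = ⟨restr γ t', h2⟩ := hemb.injective (by
    change f t' pt1 = restr γ t' pt1
    rw [hf1, hr1])
  have heq' : f t' = restr γ t' := congrArg Subtype.val heq
  have hl := (hf t').loc
  rw [heq'] at hl
  rw [← hℓ, speed_unique hl (restr_loc h t')]

lemma min_upto [ProperSpace X] (hgeo : GeodesicSpace X) {p : X} {γ : C(I01, X)} {L ℓ : ℝ}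
    (h : IsLocGeod γ L) (h0 : γ pt0 = p)
    (hi : ENNReal.ofReal ℓ < inj p) (hc : ENNReal.ofReal ℓ < conjRad p)
    (b : I01) (hb : L * b ≤ ℓ) : dist p (γ b) = L * b := by
  have hcont : Continuous (fun x : ℝ => γ (projIcc 0 1 zero_le_one x)) :=
    γ.continuous.comp continuous_projIcc
  have key : Icc (0:ℝ) b ⊆ {x : ℝ | dist p (γ (projIcc 0 1 zero_le_one x)) = L * x} := by
    apply IsClosed.Icc_subset_of_forall_exists_gt
    · apply IsClosed.inter _ isClosed_Icc
      exact isClosed_eq (continuous_const.dist hcont) (by fun_prop)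
    · have : projIcc (0:ℝ) 1 zero_le_one 0 = pt0 := projIcc_left _
      change dist p (γ (projIcc 0 1 zero_le_one 0)) = L * 0
      rw [this, h0, dist_self, mul_zero]
    · rintro x ⟨hx, hx1⟩ y hy
      have hb1 := b.2.2
      have hx0 : x ∈ Icc (0:ℝ) 1 := ⟨hx1.1, hx1.2.le.trans hb1⟩
      have hle : ENNReal.ofReal (L * x) ≤ ENNReal.ofReal ℓ := ENNReal.ofReal_le_ofReal
        ((mul_le_mul_of_nonneg_left hx1.2.le h.1).trans hb)
      simp only [mem_setOf_eq] at hx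
      rw [projIcc_of_mem _ hx0] at hx
      have ho := open_lemma hgeo h h0 ⟨x, hx0⟩ hx (hle.trans_lt hi) (hle.trans_lt hc)
      obtain ⟨ε, hε, he⟩ := Metric.eventually_nhds_iff.1 ho
      obtain ⟨z, hz1, hz2⟩ := exists_between (lt_min (lt_min (hy : x < y) hx1.2)
        (show x < x + ε by linarith))
      rw [lt_min_iff, lt_min_iff] at hz2
      have hz0 : z ∈ Icc (0:ℝ) 1 := ⟨hx0.1.trans hz1.le, hz2.1.2.le.trans hb1⟩
      refine ⟨z, ?_, hz1, hz2.1.1.le⟩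
      simp only [mem_setOf_eq]
      rw [projIcc_of_mem _ hz0]
      apply he
      change |z - x| < ε
      rw [abs_of_pos (by linarith)]; linarith
  have := key ⟨b.2.1, le_rfl⟩
  have e : projIcc (0:ℝ) 1 zero_le_one (b:ℝ) = b := projIcc_val _ b
  simpa [e] using this

lemma main_aux [ProperSpace X]
    (hgeo : GeodesicSpace X) (p q : X) (γ σ : C(I01, X)) (Lγ Lσ : ℝ)
    (hγ : IsLocGeod γ Lγ) (hσ : IsLocGeod σ Lσ)
    (hγ0 : γ pt0 = p) (hγ1 : γ pt1 = q) (hσ0 : σ pt0 = p) (hσ1 : σ pt1 = q) (hne : γ ≠ σ)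
    (hle : Lγ ≤ Lσ)
    (hi : ENNReal.ofReal ((Lγ + Lσ) / 2) < inj p)
    (hc : ENNReal.ofReal ((Lγ + Lσ) / 2) < conjRad p) : False := by
  have e0 : ((pt0 : I01) : ℝ) = 0 := rfl
  have e1 : ((pt1 : I01) : ℝ) = 1 := rfl
  rcases hle.eq_or_lt with heq | hlt
  · subst heq
    have hh : (Lγ + Lγ) / 2 = Lγ := by ring
    rw [hh] at hi hc
    have a := min_upto hgeo hγ hγ0 hi hc pt1 (by rw [e1, mul_one])
    have b := min_upto hgeo hσ hσ0 hi hc pt1 (by rw [e1, mul_one])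
    have ga := restr_geod hγ pt1 (by rw [hγ0, a])
    have gb := restr_geod hσ pt1 (by rw [hσ0, b])
    rw [restr_pt1, e1, mul_one] at ga gb
    exact hne (unique_of_lt_inj ga gb hγ0 hσ0 (by rw [hγ1, hσ1]) hi)
  · have hγn := hγ.1
    have hpos : 0 < Lσ := hγn.trans_lt hlt
    have ht0 : (Lγ + Lσ) / 2 / Lσ ∈ Icc (0:ℝ) 1 :=
      ⟨by positivity, by rw [div_le_one hpos]; linarith⟩
    have ht1 : (Lγ + Lσ) / 2 / Lσ < 1 := by rw [div_lt_one hpos]; linarith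
    have hmul : Lσ * ((Lγ + Lσ) / 2 / Lσ) = (Lγ + Lσ) / 2 := by field_simp
    have hm := min_upto hgeo hσ hσ0 hi hc ⟨_, ht0⟩ hmul.le
    have ho := open_lemma hgeo hσ hσ0 ⟨_, ht0⟩ hm (by rw [hmul]; exact hi) (by rw [hmul]; exact hc)
    obtain ⟨ε, hε, he⟩ := Metric.eventually_nhds_iff.1 ho
    obtain ⟨z, hz1, hz2⟩ := exists_between (lt_min ht1
      (show (Lγ + Lσ) / 2 / Lσ < (Lγ + Lσ) / 2 / Lσ + ε by linarith))
    rw [lt_min_iff] at hz2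
    have hz0 : z ∈ Icc (0:ℝ) 1 := ⟨ht0.1.trans hz1.le, hz2.1.le⟩
    have hz := @he ⟨z, hz0⟩ (by
      change |z - _| < ε
      rw [abs_of_pos (by linarith)]; linarith)
    have l1 := lip hγ pt0 pt1 (by rw [e0, e1]; exact zero_le_one)
    have l2 := lip hσ ⟨z, hz0⟩ pt1 hz0.2
    rw [hγ0, hγ1, e0, e1] at l1
    rw [hσ1, e1] at l2
    have l3 := dist_triangle_right p (σ ⟨z, hz0⟩) q
    have l4 := mul_lt_mul_of_pos_left hz1 hpos
    rw [hmul] at l4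
    simp only at hz l2
    linarith

/-- In a proper geodesic metric space, if `γ` and `σ` are two distinct local
geodesics joining `p` to `q`, and `inj p < conj X` or `(L γ + L σ)/2 < conj X`, then
`inj p ≤ (L γ + L σ)/2`. -/
theorem inj_le_half_sum_lengths {X : Type*} [MetricSpace X] [ProperSpace X]
    (hgeo : GeodesicSpace X) (p q : X) (γ σ : C(I01, X)) (Lγ Lσ : ℝ)
    (hγ : IsLocGeod γ Lγ) (hσ : IsLocGeod σ Lσ)
    (hγ0 : γ pt0 = p) (hγ1 : γ pt1 = q) (hσ0 : σ pt0 = p) (hσ1 : σ pt1 = q) (hne : γ ≠ σ)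
    (h : inj p < conjSpace X ∨ ENNReal.ofReal ((Lγ + Lσ) / 2) < conjSpace X) :
    inj p ≤ ENNReal.ofReal ((Lγ + Lσ) / 2) := by
  by_contra hcon
  rw [not_le] at hcon
  have hc : ENNReal.ofReal ((Lγ + Lσ) / 2) < conjRad p := by
    refine lt_of_lt_of_le ?_ (iInf_le _ p : conjSpace X ≤ conjRad p)
    rcases h with h | h
    · exact hcon.trans h
    · exact h
  rcases le_total Lγ Lσ with hle | hle
  · exact main_aux hgeo p q γ σ Lγ Lσ hγ hσ hγ0 hγ1 hσ0 hσ1 hne hle hcon hc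
  · rw [add_comm] at hcon hc
    exact main_aux hgeo p q σ γ Lσ Lγ hσ hγ hσ0 hσ1 hγ0 hγ1 hne.symm hle hcon hc

end InjSoul
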